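/- arXiv:1406.0317 — 4 statements merged into one kernel-verified Lean document; each statement's English description precedes it below -/
import Mathlib

section
/- Let K be a compact metric space equipped with its Borel σ-algebra, and let U be a finite-dimensional subspace of the space C(K, ℝ) of continuous real-valued functions on K. On the set P(K) of Borel probability measures on K define a preorder by: ν ⪯ ν' iff ∫_K u² dν ≤ ∫_K u² dν' for every u ∈ U. Let C ⊆ P(K) be a nonempty chain (totally ordered subset) with respect to ⪯. Then there exists a sequence (ν_i) of elements of C that is nondecreasing with respect to ⪯ and such that for every u ∈ U, the sequence ∫_K u² dν_i converges to sup_{ν ∈ C} ∫_K u² dν. -/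
open MeasureTheory Filter Topology

/-- The preorder on probability measures given by comparison of the integrals of `u ^ 2`
for all `u` in a subspace `U` of continuous functions: `ν ⪯ ν'` iff
`∫ u² dν ≤ ∫ u² dν'` for every `u ∈ U`. -/
def sqPre {K : Type*} [TopologicalSpace K] [MeasurableSpace K]
    (U : Submodule ℝ C(K, ℝ)) (ν ν' : ProbabilityMeasure K) : Prop :=
  ∀ u ∈ U, ∫ x, (u x) ^ 2 ∂(ν : Measure K) ≤ ∫ x, (u x) ^ 2 ∂(ν' : Measure K)

theorem sqPre.refl {K : Type*} [TopologicalSpace K] [MeasurableSpace K]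
    (U : Submodule ℝ C(K, ℝ)) (ν : ProbabilityMeasure K) : sqPre U ν ν :=
  fun _ _ => le_rfl

/-- A totally ordered family in a separable space contains a nondecreasing sequence whose
terms dominate every member of some countable dense subset of the family. -/
theorem IsChain.exists_seq_forall_dense_rel {X : Type*} [TopologicalSpace X] {r : X → X → Prop}
    (hr : ∀ x, r x x) {s : Set X} [TopologicalSpace.SeparableSpace s] (hs : s.Nonempty)
    (hchain : IsChain r s) :
    ∃ (b : ℕ → s) (x : ℕ → s), DenseRange b ∧ (∀ n, r (x n) (x (n + 1))) ∧
      ∀ n, ∃ m, r (b n) (x m) := by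
  have := hs.to_subtype
  obtain ⟨b, hb⟩ := TopologicalSpace.exists_dense_seq s
  have : Std.Refl r := ⟨hr⟩
  have hdir : Directed r fun n => (b n : X) := fun i j => by
    rcases hchain.total (b i).2 (b j).2 with h | h
    · exact ⟨j, h, hr _⟩
    · exact ⟨i, hr _, h⟩
  exact ⟨b, fun n => b (hdir.sequence _ n), hb, hdir.sequence_mono_nat,
    fun n => ⟨_, hdir.rel_sequence n⟩⟩

theorem exists_monotone_seq_tendsto_sSup_of_chain
    {K : Type*} [MetricSpace K] [CompactSpace K] [MeasurableSpace K] [BorelSpace K]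
    (U : Submodule ℝ C(K, ℝ)) [FiniteDimensional ℝ U]
    (C : Set (ProbabilityMeasure K)) (hC : C.Nonempty) (hchain : IsChain (sqPre U) C) :
    ∃ ν : ℕ → ProbabilityMeasure K, (∀ i, ν i ∈ C) ∧
      (∀ i j, i ≤ j → sqPre U (ν i) (ν j)) ∧
      ∀ u ∈ U, Tendsto (fun i => ∫ x, (u x) ^ 2 ∂(ν i : Measure K)) atTop
        (𝓝 (sSup ((fun ν' : ProbabilityMeasure K =>
          ∫ x, (u x) ^ 2 ∂(ν' : Measure K)) '' C))) := by
  obtain ⟨b, x, hb, hx, hbx⟩ := hchain.exists_seq_forall_dense_rel (sqPre.refl U) hC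
  have hmono : ∀ u ∈ U, Monotone fun i => ∫ t, (u t) ^ 2 ∂((x i : ProbabilityMeasure K) :
      Measure K) := fun u hu => monotone_nat_of_le_succ fun n => hx n u hu
  refine ⟨fun i => x i, fun i => (x i).2, fun i j hij u hu => hmono u hu hij, fun u hu => ?_⟩
  refine tendsto_atTop_isLUB (hmono u hu) ?_
  have hcont : Continuous fun ν : ProbabilityMeasure K => ∫ t, (u t) ^ 2 ∂(ν : Measure K) :=
    ProbabilityMeasure.continuous_integral_continuousMap (u ^ 2)
  have hbdd : BddAbove ((fun ν : ProbabilityMeasure K => ∫ t, (u t) ^ 2 ∂(ν : Measure K)) '' C) :=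
    (isCompact_range hcont).bddAbove.mono (Set.image_subset_range _ _)
  refine ⟨?_, fun M hM => csSup_le (hC.image _) ?_⟩
  · rintro _ ⟨i, rfl⟩
    exact le_csSup hbdd ⟨x i, (x i).2, rfl⟩
  · rintro _ ⟨c, hc, rfl⟩
    refine hb.induction_on (p := fun c : C => ∫ t, (u t) ^ 2 ∂(c.1 : Measure K) ≤ M) ⟨c, hc⟩
      (isClosed_le (hcont.comp continuous_subtype_val) continuous_const) fun n => ?_
    obtain ⟨m, hm⟩ := hbx n
    exact (hm u hu).trans (hM ⟨m, rfl⟩)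
end

section
/- Let K be a compact metric space equipped with its Borel σ-algebra, and let U be a finite-dimensional subspace of the space C(K, ℝ) of continuous real-valued functions on K. On the set P(K) of Borel probability measures on K define a preorder by: ν ⪯ ν' iff ∫_K u² dν ≤ ∫_K u² dν' for every u ∈ U. Fix ν₁ ∈ P(K) and set M₁ = {ν ∈ P(K) : ν₁ ⪯ ν}. Then M₁ contains a maximal element ν, i.e. an element ν ∈ M₁ such that every σ ∈ M₁ with ν ⪯ σ also satisfies σ ⪯ ν. -/
open MeasureTheory Filter Topology

theorem isClosed_setOf_sqPre {K : Type*} [TopologicalSpace K] [CompactSpace K]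
    [MeasurableSpace K] [OpensMeasurableSpace K] (U : Submodule ℝ C(K, ℝ))
    (ν : ProbabilityMeasure K) : IsClosed {σ | sqPre U ν σ} := by
  simp only [sqPre, Set.ofPred_forall]
  refine isClosed_iInter fun u => isClosed_iInter fun _ => isClosed_le continuous_const ?_
  exact ProbabilityMeasure.continuous_integral_boundedContinuousFunction
    (BoundedContinuousFunction.mkOfCompact (u ^ 2))

theorem exists_maximal_element
    {K : Type*} [MetricSpace K] [CompactSpace K] [MeasurableSpace K] [BorelSpace K]
    (U : Submodule ℝ C(K, ℝ)) [FiniteDimensional ℝ U]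
    (ν₁ : ProbabilityMeasure K) :
    ∃ ν : ProbabilityMeasure K, sqPre U ν₁ ν ∧
      ∀ σ : ProbabilityMeasure K, sqPre U ν₁ σ → sqPre U ν σ → sqPre U σ ν := by
  let : Preorder (ProbabilityMeasure K) :=
    { le := sqPre U
      le_refl := fun _ _ _ => le_rfl
      le_trans := fun _ _ _ h h' u hu => (h u hu).trans (h' u hu) }
  obtain ⟨ν, hν, hmax⟩ := zorn_le_nonempty_Ici₀ ν₁ (fun c _ hc y hy => by
    have : Nonempty c := ⟨⟨y, hy⟩⟩
    obtain ⟨ub, hub⟩ := IsCompact.nonempty_iInter_of_directed_nonempty_isCompact_isClosed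
      (fun ν : c => Set.Ici (ν : ProbabilityMeasure K))
      (fun a b => (hc.total a.2 b.2).elim
        (fun h => ⟨b, Set.Ici_subset_Ici.2 h, subset_rfl⟩)
        (fun h => ⟨a, subset_rfl, Set.Ici_subset_Ici.2 h⟩))
      (fun _ => Set.nonempty_Ici)
      (fun ν => (isClosed_setOf_sqPre U (ν : ProbabilityMeasure K)).isCompact)
      (fun ν => isClosed_setOf_sqPre U (ν : ProbabilityMeasure K))
    exact ⟨ub, fun z hz => Set.mem_iInter.1 hub ⟨z, hz⟩⟩) ν₁ le_rfl
  exact ⟨ν, hν, fun _ _ h => hmax h⟩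
end

section
/- Let K be a compact metric space equipped with its Borel σ-algebra, and let U be a finite-dimensional subspace of the space C(K, ℝ) of continuous real-valued functions on K. On the set P(K) of Borel probability measures on K define a preorder by: ν ⪯ ν' iff ∫_K u² dν ≤ ∫_K u² dν' for every u ∈ U. Let q : K → P(K) be a Markov kernel (a measurable map, where P(K) carries the Borel σ-algebra of the weak convergence topology) such that u(x)² ≤ ∫_K u² d(q x) for every x ∈ K and every u ∈ U. Fix ν₁ ∈ P(K) and set M₁ = {ν ∈ P(K) : ν₁ ⪯ ν}. If ν is a maximal element of M₁ (i.e. ν ∈ M₁ and every σ ∈ M₁ with ν ⪯ σ satisfies σ ⪯ ν), then for every u ∈ U one has ∫_K u² dν = ∫_K ( ∫_K u² d(q x) ) dν(x). -/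
open MeasureTheory Filter Topology

/-- A map into probability measures that is measurable for the Borel σ-algebra of the topology of
weak convergence is measurable as a map into measures. -/
theorem measurable_toMeasure_of_measurable_borel {α Ω : Type*} [MeasurableSpace α]
    [TopologicalSpace Ω] [HasOuterApproxClosed Ω] [MeasurableSpace Ω] [BorelSpace Ω]
    {q : α → ProbabilityMeasure Ω}
    (hq : @Measurable α (ProbabilityMeasure Ω) _ (borel (ProbabilityMeasure Ω)) q) :
    Measurable fun x ↦ (q x : Measure Ω) := by
  refine Measurable.measure_of_isPiSystem_of_isProbabilityMeasure
    (S := {s : Set Ω | IsClosed s})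
    (by rw [BorelSpace.measurable_eq (α := Ω), borel_eq_generateFrom_isClosed])
    isPiSystem_isClosed fun F hF ↦ ?_
  have hF : IsClosed F := hF
  refine measurable_of_tendsto_metrizable
    (f := fun n x ↦ ∫⁻ y, hF.apprSeq n y ∂(q x : Measure Ω)) (fun n ↦ ?_)
    (tendsto_pi_nhds.2 fun x ↦ HasOuterApproxClosed.tendsto_lintegral_apprSeq hF _)
  exact @Measurable.comp _ _ _ _ (borel (ProbabilityMeasure Ω)) _ _ _
    (@Continuous.measurable _ _ _ (borel _)
      (@BorelSpace.opensMeasurable _ _ (borel _) (@BorelSpace.mk _ _ (borel _) rfl))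
      _ _ _ _ (ProbabilityMeasure.continuous_lintegral_boundedContinuousFunction (hF.apprSeq n)))
    hq

theorem maximal_element_is_fixed_by_kernel
    {K : Type*} [MetricSpace K] [CompactSpace K] [MeasurableSpace K] [BorelSpace K]
    (U : Submodule ℝ C(K, ℝ)) [FiniteDimensional ℝ U]
    (q : K → ProbabilityMeasure K)
    (hq : @Measurable K (ProbabilityMeasure K) _ (borel (ProbabilityMeasure K)) q)
    (hqU : ∀ x : K, ∀ u ∈ U, (u x) ^ 2 ≤ ∫ y, (u y) ^ 2 ∂(q x : Measure K))
    (ν₁ ν : ProbabilityMeasure K)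
    (hν : sqPre U ν₁ ν)
    (hmax : ∀ σ : ProbabilityMeasure K, sqPre U ν₁ σ → sqPre U ν σ → sqPre U σ ν) :
    ∀ u ∈ U, ∫ x, (u x) ^ 2 ∂(ν : Measure K)
      = ∫ x, (∫ y, (u y) ^ 2 ∂(q x : Measure K)) ∂(ν : Measure K) := by
  have hqm := measurable_toMeasure_of_measurable_borel hq
  let κ : ProbabilityTheory.Kernel K K := ⟨fun x ↦ (q x : Measure K), hqm⟩
  have hprob : IsProbabilityMeasure ((ν : Measure K).bind κ) :=
    isProbabilityMeasure_bind hqm.aemeasurable (ae_of_all _ fun x ↦ (q x).2)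
  have hint (u : C(K, ℝ)) (μ : Measure K) [IsFiniteMeasure μ] :
      Integrable (fun x ↦ (u x) ^ 2) μ :=
    (by fun_prop : Continuous fun x ↦ (u x) ^ 2).integrable_of_hasCompactSupport
      (HasCompactSupport.of_compactSpace _)
  have hbind (u : C(K, ℝ)) : ∫ y, (u y) ^ 2 ∂((ν : Measure K).bind κ)
      = ∫ x, (∫ y, (u y) ^ 2 ∂(q x : Measure K)) ∂(ν : Measure K) := by
    have h := hint u ((ν : Measure K).bind κ)
    rw [Measure.comp_eq_comp_const_apply] at h ⊢
    exact ProbabilityTheory.Kernel.integral_comp h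
  have hintq (u : C(K, ℝ)) :
      Integrable (fun x ↦ ∫ y, (u y) ^ 2 ∂(q x : Measure K)) (ν : Measure K) := by
    change Integrable (fun x ↦ ∫ y, (u y) ^ 2 ∂κ x) (ν : Measure K)
    simpa using Measure.integrable_integral_norm_of_integrable_comp
      (hint u ((ν : Measure K).bind κ))
  let σ : ProbabilityMeasure K := ⟨(ν : Measure K).bind κ, hprob⟩
  have hle : sqPre U ν σ := fun u hu ↦ by
    change _ ≤ ∫ y, (u y) ^ 2 ∂((ν : Measure K).bind κ)
    rw [hbind u]
    exact integral_mono (hint u _) (hintq u) fun x ↦ hqU x u hu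
  intro u hu
  rw [← hbind u]
  exact le_antisymm (hle u hu) (hmax σ (fun v hv ↦ (hν v hv).trans (hle v hv)) hle u hu)
end

section
/- Let K be a compact metric space equipped with its Borel σ-algebra, and let U be a finite-dimensional subspace of the space C(K, ℝ) of continuous real-valued functions on K. On the set P(K) of Borel probability measures on K define a preorder by: ν ⪯ ν' iff ∫_K u² dν ≤ ∫_K u² dν' for every u ∈ U. Let q : K → P(K) be a Markov kernel (a measurable map, where P(K) carries the Borel σ-algebra of the weak convergence topology) such that u(x)² ≤ ∫_K u² d(q x) for every x ∈ K and every u ∈ U. Fix ν₁ ∈ P(K) and set M₁ = {ν ∈ P(K) : ν₁ ⪯ ν}. If ν is a maximal element of M₁ (i.e. ν ∈ M₁ and every σ ∈ M₁ with ν ⪯ σ satisfies σ ⪯ ν), then for every u ∈ U, the equality u(x)² = ∫_K u² d(q x) holds for ν-almost every x ∈ K; in particular, ν({x ∈ K : u(x)² < ∫_K u² d(q x)}) = 0. -/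
open MeasureTheory Filter Topology

/-- The inclusion of the probability measures, with the Borel σ-algebra of the weak topology,
into the measures is measurable. -/
theorem measurable_toMeasure_borel {X : Type*} [TopologicalSpace X] [HasOuterApproxClosed X]
    [MeasurableSpace X] [BorelSpace X] :
    @Measurable (ProbabilityMeasure X) (Measure X) (borel _) _ (fun μ ↦ (μ : Measure X)) := by
  borelize (ProbabilityMeasure X)
  refine Measurable.measure_of_isPiSystem_of_isProbabilityMeasure
    ((BorelSpace.measurable_eq (α := X)).trans (borel_eq_generateFrom_isClosed (α := X)))
    isPiSystem_isClosed fun F (hF : IsClosed F) ↦ ?_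
  refine measurable_of_tendsto_metrizable (f := fun n (μ : ProbabilityMeasure X) ↦
    ∫⁻ x, hF.apprSeq n x ∂(μ : Measure X)) (fun n ↦ ?_) (tendsto_pi_nhds.2 fun μ ↦
    HasOuterApproxClosed.tendsto_lintegral_apprSeq hF (μ : Measure X))
  have h := (ProbabilityMeasure.continuous_testAgainstNN_eval
    (hF.apprSeq n)).measurable.coe_nnreal_ennreal
  simpa [FiniteMeasure.testAgainstNN_coe_eq] using h

theorem maximal_element_ae_equality
    {K : Type*} [MetricSpace K] [CompactSpace K] [MeasurableSpace K] [BorelSpace K]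
    (U : Submodule ℝ C(K, ℝ)) [FiniteDimensional ℝ U]
    (q : K → ProbabilityMeasure K)
    (hq : @Measurable K (ProbabilityMeasure K) _ (borel (ProbabilityMeasure K)) q)
    (hqU : ∀ x : K, ∀ u ∈ U, (u x) ^ 2 ≤ ∫ y, (u y) ^ 2 ∂(q x : Measure K))
    (ν₁ ν : ProbabilityMeasure K)
    (hν : sqPre U ν₁ ν)
    (hmax : ∀ σ : ProbabilityMeasure K, sqPre U ν₁ σ → sqPre U ν σ → sqPre U σ ν) :
    ∀ u ∈ U,
      (∀ᵐ x ∂(ν : Measure K), (u x) ^ 2 = ∫ y, (u y) ^ 2 ∂(q x : Measure K)) ∧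
      (ν : Measure K) {x : K | (u x) ^ 2 < ∫ y, (u y) ^ 2 ∂(q x : Measure K)} = 0 := by
  let κ : ProbabilityTheory.Kernel K K :=
    ⟨fun x ↦ (q x : Measure K), measurable_toMeasure_borel.comp hq⟩
  have : ProbabilityTheory.IsMarkovKernel κ := ⟨fun x ↦ (q x).2⟩
  let σ : ProbabilityMeasure K := ⟨(ν : Measure K).bind κ, inferInstance⟩
  have h_int (u : C(K, ℝ)) (μ : Measure K) [IsFiniteMeasure μ] :
      Integrable (fun x ↦ (u x) ^ 2) μ :=
    ((map_continuous u).pow 2).integrable_of_hasCompactSupport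
      (HasCompactSupport.of_compactSpace _)
  have h_int_q (u : C(K, ℝ)) :
      Integrable (fun x ↦ ∫ y, (u y) ^ 2 ∂(q x : Measure K)) (ν : Measure K) := by
    have h := (Measure.integrable_comp_iff (h_int u (σ : Measure K)).1).1 (h_int u (σ : Measure K))
    simpa [κ] using h.2
  have h_bind (u : C(K, ℝ)) : ∫ x, (u x) ^ 2 ∂(σ : Measure K) =
      ∫ x, ∫ y, (u y) ^ 2 ∂(q x : Measure K) ∂(ν : Measure K) := by
    have h := h_int u (σ : Measure K)
    change Integrable _ ((ν : Measure K).bind κ) at h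
    change ∫ x, (u x) ^ 2 ∂((ν : Measure K).bind κ) = _
    rw [Measure.comp_eq_comp_const_apply] at h ⊢
    exact ProbabilityTheory.Kernel.integral_comp h
  have hνσ : sqPre U ν σ := fun u hu ↦ by
    rw [h_bind]
    exact integral_mono (h_int u _) (h_int_q u) fun x ↦ hqU x u hu
  have hσν : sqPre U σ ν := hmax σ (fun u hu ↦ (hν u hu).trans (hνσ u hu)) hνσ
  intro u hu
  have h_eq : ∀ᵐ x ∂(ν : Measure K), (u x) ^ 2 = ∫ y, (u y) ^ 2 ∂(q x : Measure K) :=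
    (integral_eq_iff_of_ae_le (h_int u _) (h_int_q u) (ae_of_all _ fun x ↦ hqU x u hu)).1
      (((hνσ u hu).antisymm (hσν u hu)).trans (h_bind u))
  refine ⟨h_eq, measure_mono_null (fun x hx ↦ ?_) (ae_iff.1 h_eq)⟩
  exact ne_of_lt hx
end
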